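/- arXiv:2210.03009 — 2 statements merged into one kernel-verified Lean document; each statement's English description precedes it below -/
import Mathlib

section
/- For every t > 0, the function u ↦ ∫₀^t (1 − φ(u)) · h_s(u) ds is well defined for every u ∈ ℝ (the integrand is absolutely integrable in s on (0, t)), vanishes identically on the neighborhood of 0 where φ ≡ 1, and is a C^∞ function on all of ℝ. -/
open MeasureTheory Topology Filter

/-- The one-dimensional heat kernel `h_t(u) = (4πt)^(−1/2) · exp(−u²/(4t))`. -/
noncomputable def heat (t u : ℝ) : ℝ :=
  (Real.sqrt (4 * Real.pi * t))⁻¹ * Real.exp (-(u ^ 2) / (4 * t))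

/-!
Differentiating `h_s(u)` in `u` multiplies it by `-u / (2s)`, so the functions
`J_m(u) = ∫₀ᵗ s⁻ᵐ h_s(u) ds` satisfy `dJ_m/du = -(u / 2) J_{m+1}` away from `u = 0`: for
`|u| ≥ r > 0` the factor `exp(-u² / (4s))` absorbs every power of `s⁻¹`, and the integrands are
dominated by multiples of the integrable function `s ↦ h_s(0)`. Hence each `J_m` is smooth on
`u ≠ 0`, and the factor `1 - φ`, which vanishes near `0`, removes the singularity there.
-/

section Smoothness

variable {𝕜 F : Type*} [NontriviallyNormedField 𝕜] [NormedAddCommGroup F] [NormedSpace 𝕜 F]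

theorem contDiffOn_of_hasDerivAt_smul_succ {n : ℕ∞} {f : ℕ → 𝕜 → F} {g : 𝕜 → 𝕜} {s : Set 𝕜}
    (hs : IsOpen s) (hg : ContDiffOn 𝕜 n g s)
    (hf : ∀ k, ∀ x ∈ s, HasDerivAt (f k) (g x • f (k + 1) x) x) (k : ℕ) :
    ContDiffOn 𝕜 n (f k) s := by
  have hdiff (k : ℕ) : DifferentiableOn 𝕜 (f k) s := fun x hx =>
    (hf k x hx).differentiableAt.differentiableWithinAt
  refine contDiffOn_iff_forall_nat_le.mpr fun m hm => ?_
  induction m generalizing k with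
  | zero => exact contDiffOn_zero.mpr (hdiff k).continuousOn
  | succ m ih =>
    have hmn : (m : ℕ∞) ≤ n := le_trans (mod_cast m.le_succ) hm
    have hderiv : ContDiffOn 𝕜 m (fun x => g x • f (k + 1) x) s :=
      (hg.of_le (mod_cast hmn)).smul (ih (k + 1) hmn)
    exact (contDiffOn_succ_iff_deriv_of_isOpen hs).mpr
      ⟨hdiff k, by simp, hderiv.congr fun x hx => (hf k x hx).deriv⟩

theorem contDiff_smul_of_tsupport_subset {E : Type*} [NormedAddCommGroup E] [NormedSpace 𝕜 E]
    {n : WithTop ℕ∞} {g : E → 𝕜} {f : E → F} {s : Set E} (hs : IsOpen s)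
    (hg : ContDiffOn 𝕜 n g s) (hf : ContDiffOn 𝕜 n f s) (hgs : tsupport g ⊆ s) :
    ContDiff 𝕜 n (fun x => g x • f x) := by
  refine contDiff_iff_contDiffAt.mpr fun x => ?_
  by_cases hx : x ∈ tsupport g
  · exact (hg.smul hf).contDiffAt (hs.mem_nhds (hgs hx))
  · refine (contDiffAt_const (c := (0 : F))).congr_of_eventuallyEq ?_
    filter_upwards [notMem_tsupport_iff_eventuallyEq.mp hx] with y hy
    rw [hy, Pi.zero_apply, zero_smul]

end Smoothness

theorem pow_mul_exp_neg_mul_le {a x : ℝ} (ha : 0 < a) (hx : 0 ≤ x) (m : ℕ) :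
    x ^ m * Real.exp (-(a * x)) ≤ m.factorial / a ^ m := by
  have hexp : (a * x) ^ m / m.factorial ≤ Real.exp (a * x) :=
    Real.pow_div_factorial_le_exp _ (by positivity) m
  rw [div_le_iff₀ (by positivity), mul_pow] at hexp
  rw [Real.exp_neg, ← div_eq_mul_inv, div_le_div_iff₀ (Real.exp_pos _) (by positivity)]
  linarith

theorem heat_nonneg (s u : ℝ) : 0 ≤ heat s u := by
  unfold heat
  positivity

theorem heat_zero_right (s : ℝ) : heat s 0 = (√(4 * Real.pi * s))⁻¹ := by
  simp [heat]

theorem heat_eq_heat_zero_mul_exp (s u : ℝ) :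
    heat s u = heat s 0 * Real.exp (-(u ^ 2 / 4 * s⁻¹)) := by
  rw [heat_zero_right, heat]
  congr 2
  ring

theorem heat_le_heat_zero {s : ℝ} (hs : 0 ≤ s) (u : ℝ) : heat s u ≤ heat s 0 := by
  rw [heat_eq_heat_zero_mul_exp]
  refine mul_le_of_le_one_right (heat_nonneg s 0) (Real.exp_le_one_iff.mpr ?_)
  exact neg_nonpos.mpr (by positivity)

theorem inv_pow_mul_heat_le {r s u : ℝ} (hr : 0 < r) (hs : 0 ≤ s) (hu : r ≤ |u|) (m : ℕ) :
    s⁻¹ ^ m * heat s u ≤ m.factorial / (r ^ 2 / 4) ^ m * heat s 0 := by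
  have hsq : r ^ 2 ≤ u ^ 2 := by
    rw [← sq_abs u]
    gcongr
  have hheat : 0 ≤ heat s 0 := heat_nonneg s 0
  calc s⁻¹ ^ m * heat s u
      = s⁻¹ ^ m * Real.exp (-(u ^ 2 / 4 * s⁻¹)) * heat s 0 := by
        rw [heat_eq_heat_zero_mul_exp]
        ring
    _ ≤ s⁻¹ ^ m * Real.exp (-(r ^ 2 / 4 * s⁻¹)) * heat s 0 := by gcongr
    _ ≤ m.factorial / (r ^ 2 / 4) ^ m * heat s 0 := by
        gcongr
        exact pow_mul_exp_neg_mul_le (by positivity) (inv_nonneg.mpr hs) m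

theorem measurable_inv_pow_mul_heat (m : ℕ) (u : ℝ) :
    Measurable fun s : ℝ => s⁻¹ ^ m * heat s u := by
  unfold heat
  fun_prop

theorem hasDerivAt_heat (s u : ℝ) : HasDerivAt (heat s) (-(u / 2) * (s⁻¹ * heat s u)) u := by
  have hexponent : HasDerivAt (fun x : ℝ => -(x ^ 2) / (4 * s)) (-(2 * u) / (4 * s)) u := by
    simpa using (hasDerivAt_pow 2 u).neg.div_const (4 * s)
  refine (hexponent.exp.const_mul (√(4 * Real.pi * s))⁻¹).congr_deriv ?_
  rw [heat]
  ring

theorem integrableOn_heat_zero (t : ℝ) : IntegrableOn (fun s => heat s 0) (Set.Ioo 0 t) := by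
  have hrpow : IntegrableOn (fun s : ℝ => s ^ (-(1 / 2) : ℝ)) (Set.Ioo 0 t) :=
    (intervalIntegral.intervalIntegrable_rpow' (by norm_num)).1.mono_set Set.Ioo_subset_Ioc_self
  refine IntegrableOn.congr_fun (hrpow.const_mul (√(4 * Real.pi))⁻¹) (fun s hs => ?_)
    measurableSet_Ioo
  rw [heat_zero_right, Real.sqrt_mul (show 0 ≤ 4 * Real.pi by positivity), mul_inv,
    Real.rpow_neg hs.1.le, ← Real.sqrt_eq_rpow]

theorem integrableOn_heat (t u : ℝ) : IntegrableOn (fun s => heat s u) (Set.Ioo 0 t) := by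
  have hmeas : Measurable fun s => heat s u := by
    simpa using measurable_inv_pow_mul_heat 0 u
  refine (integrableOn_heat_zero t).mono' hmeas.aestronglyMeasurable ?_
  filter_upwards [ae_restrict_mem measurableSet_Ioo] with s hs
  rw [Real.norm_of_nonneg (heat_nonneg s u)]
  exact heat_le_heat_zero hs.1.le u

theorem integrableOn_inv_pow_mul_heat (t : ℝ) (m : ℕ) {u : ℝ} (hu : u ≠ 0) :
    IntegrableOn (fun s => s⁻¹ ^ m * heat s u) (Set.Ioo 0 t) := by
  refine ((integrableOn_heat_zero t).const_mul (m.factorial / (|u| ^ 2 / 4) ^ m)).mono'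
    (measurable_inv_pow_mul_heat m u).aestronglyMeasurable ?_
  filter_upwards [ae_restrict_mem measurableSet_Ioo] with s hs
  have hs0 : 0 ≤ s := hs.1.le
  have hheat : 0 ≤ heat s u := heat_nonneg s u
  rw [Real.norm_of_nonneg (by positivity)]
  exact inv_pow_mul_heat_le (abs_pos.mpr hu) hs0 le_rfl m

/-- The `m`-th inverse time moment `∫₀ᵗ s⁻ᵐ h_s(u) ds` of the heat kernel at the point `u`. These
functions form a family closed, up to the factor `-u / 2`, under differentiation in `u ≠ 0`. For
`t > 0`, `m ≥ 1` and `u = 0` the integral diverges and the definition takes the junk value `0`. -/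
noncomputable def heatInvMoment (t : ℝ) (m : ℕ) (u : ℝ) : ℝ :=
  ∫ s in Set.Ioo 0 t, s⁻¹ ^ m * heat s u

theorem norm_neg_half_mul_inv_pow_mul_heat_le {s u x : ℝ} (hs : 0 ≤ s)
    (hx : |x| ∈ Set.Ioo (|u| / 2) (2 * |u|)) (m : ℕ) :
    ‖-(x / 2) * (s⁻¹ ^ m * heat s x)‖ ≤
      |u| * (m.factorial / ((|u| / 2) ^ 2 / 4) ^ m * heat s 0) := by
  have hheat : 0 ≤ heat s x := heat_nonneg s x
  have habs : 0 < |u| := by linarith [hx.1, hx.2]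
  have hfactor : ‖-(x / 2)‖ ≤ |u| := by
    rw [Real.norm_eq_abs, abs_neg, abs_div, abs_two]
    linarith [hx.2]
  rw [norm_mul, Real.norm_of_nonneg (show 0 ≤ s⁻¹ ^ m * heat s x by positivity)]
  exact mul_le_mul hfactor (inv_pow_mul_heat_le (by positivity) hs hx.1.le m) (by positivity)
    (abs_nonneg u)

theorem hasDerivAt_heatInvMoment (t : ℝ) (m : ℕ) {u : ℝ} (hu : u ≠ 0) :
    HasDerivAt (heatInvMoment t m) (-(u / 2) * heatInvMoment t (m + 1) u) u := by
  have habs : 0 < |u| := abs_pos.mpr hu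
  have hnhds : abs ⁻¹' Set.Ioo (|u| / 2) (2 * |u|) ∈ 𝓝 u :=
    continuous_abs.continuousAt.preimage_mem_nhds
      (Ioo_mem_nhds (half_lt_self habs) (by linarith))
  have hderiv (s x : ℝ) : HasDerivAt (fun y => s⁻¹ ^ m * heat s y)
      (-(x / 2) * (s⁻¹ ^ (m + 1) * heat s x)) x :=
    ((hasDerivAt_heat s x).const_mul (s⁻¹ ^ m)).congr_deriv (by ring)
  have hbound : ∀ᵐ s ∂volume.restrict (Set.Ioo 0 t), ∀ x ∈ abs ⁻¹' Set.Ioo (|u| / 2) (2 * |u|),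
      ‖-(x / 2) * (s⁻¹ ^ (m + 1) * heat s x)‖ ≤
        |u| * ((m + 1).factorial / ((|u| / 2) ^ 2 / 4) ^ (m + 1) * heat s 0) := by
    filter_upwards [ae_restrict_mem measurableSet_Ioo] with s hs x hx
    exact norm_neg_half_mul_inv_pow_mul_heat_le hs.1.le hx (m + 1)
  have hintegral := (hasDerivAt_integral_of_dominated_loc_of_deriv_le hnhds
    (Eventually.of_forall fun x => (measurable_inv_pow_mul_heat m x).aestronglyMeasurable)
    (integrableOn_inv_pow_mul_heat t m hu)
    ((measurable_inv_pow_mul_heat (m + 1) u).const_mul _).aestronglyMeasurable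
    hbound (((integrableOn_heat_zero t).const_mul _).const_mul _)
    (Eventually.of_forall fun s x _ => hderiv s x)).2
  rwa [integral_const_mul] at hintegral

theorem contDiffOn_heatInvMoment (n : ℕ∞) (t : ℝ) (m : ℕ) :
    ContDiffOn ℝ n (heatInvMoment t m) {0}ᶜ :=
  contDiffOn_of_hasDerivAt_smul_succ isOpen_compl_singleton
    (contDiff_id.div_const 2).neg.contDiffOn
    (fun k _ hu => hasDerivAt_heatInvMoment t k hu) m

theorem contDiff_integral_mul_heat {n : ℕ∞} {ψ : ℝ → ℝ} (hψ : ContDiff ℝ n ψ)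
    (hzero : ψ =ᶠ[𝓝 0] 0) (t : ℝ) :
    ContDiff ℝ n (fun u => ∫ s in Set.Ioo 0 t, ψ u * heat s u) := by
  have hsupp : tsupport ψ ⊆ {0}ᶜ :=
    Set.subset_compl_singleton_iff.mpr (notMem_tsupport_iff_eventuallyEq.mpr hzero)
  simpa [heatInvMoment, integral_const_mul] using
    contDiff_smul_of_tsupport_subset isOpen_compl_singleton hψ.contDiffOn
      (contDiffOn_heatInvMoment n t 0) hsupp

theorem stmt5_general {n : ℕ∞} {φ : ℝ → ℝ} (hφ : ContDiff ℝ n φ) {δ : ℝ} (hδ : 0 < δ)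
    (hone : ∀ x, |x| < δ → φ x = 1) (t : ℝ) :
    (∀ u : ℝ, IntegrableOn (fun s => (1 - φ u) * heat s u) (Set.Ioo 0 t)) ∧
    (∀ u : ℝ, |u| < δ → (∫ s in Set.Ioo 0 t, (1 - φ u) * heat s u) = 0) ∧
    ContDiff ℝ n (fun u => ∫ s in Set.Ioo 0 t, (1 - φ u) * heat s u) := by
  refine ⟨fun u => (integrableOn_heat t u).const_mul _, fun u hu => by simp [hone u hu],
    contDiff_integral_mul_heat (contDiff_const.sub hφ) ?_ t⟩
  filter_upwards [Metric.ball_mem_nhds 0 hδ] with x hx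
  rw [hone x (by simpa using hx), sub_self, Pi.zero_apply]

/-- For every `t > 0`, the function `u ↦ ∫₀^t (1 − φ(u))·h_s(u) ds` is well defined for
every `u` (the integrand is absolutely integrable in `s` on `(0, t)`), vanishes on the
neighborhood `{|u| < δ}` of `0` where `φ ≡ 1`, and is `C^∞` on all of `ℝ`. -/
theorem stmt5 (φ : ℝ → ℝ) (hφ : ContDiff ℝ (⊤ : ℕ∞) φ) (hsupp : HasCompactSupport φ)
    (heven : ∀ x, φ (-x) = φ x) (δ : ℝ) (hδ : 0 < δ) (hone : ∀ x, |x| < δ → φ x = 1)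
    (t : ℝ) (ht : 0 < t) :
    (∀ u : ℝ, IntegrableOn (fun s => (1 - φ u) * heat s u) (Set.Ioo 0 t)) ∧
    (∀ u : ℝ, |u| < δ → (∫ s in Set.Ioo 0 t, (1 - φ u) * heat s u) = 0) ∧
    ContDiff ℝ (⊤ : ℕ∞) (fun u => ∫ s in Set.Ioo 0 t, (1 - φ u) * heat s u) :=
  stmt5_general hφ hδ hone t
end

section
/- For every Λ > 0 there exists a C^∞ function r : ℝ² → ℝ such that r(x, y) = ρ̄_Λ(x, y) for all (x, y) with 0 ≤ x < y, and likewise a C^∞ function r̃ : ℝ² → ℝ such that r̃(x, y) = ρ̄_Λ(x, y) for all (x, y) with 0 ≤ y < x. That is, the ε → 0 limit of the propagator kernel, defined off the diagonal in ℝ_{≥0}², extends smoothly to each of the two closed sectors {0 ≤ x ≤ y} and {0 ≤ y ≤ x}. -/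
open MeasureTheory Topology Filter

/-- The `u`-derivative of the heat kernel, `h_t′(u) = −(u/(2t)) · h_t(u)`. -/
noncomputable def heat' (t u : ℝ) : ℝ := -(u / (2 * t)) * heat t u

/-- `(φh_t)′(u) = φ′(u)·h_t(u) + φ(u)·h_t′(u)`. -/
noncomputable def phiHeat' (φ : ℝ → ℝ) (t u : ℝ) : ℝ :=
  deriv φ u * heat t u + φ u * heat' t u

/-- The scalar propagator kernel
`ρ_{ε,Λ}(x, y) = −(1/2) ∫_ε^Λ [(φh_t)′(x − y) + (φh_t)′(x + y)] dt`. -/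
noncomputable def rho (φ : ℝ → ℝ) (ε Λ x y : ℝ) : ℝ :=
  -(1 / 2) * ∫ t in ε..Λ, (phiHeat' φ t (x - y) + phiHeat' φ t (x + y))

/-- `ρ̄_Λ(x, y) = lim_{ε→0⁺} ρ_{ε,Λ}(x, y)` (whenever the limit exists). -/
noncomputable def rhoBar (φ : ℝ → ℝ) (Λ x y : ℝ) : ℝ :=
  limUnder (𝓝[>] (0 : ℝ)) (fun ε => rho φ ε Λ x y)

/-!
Both terms of `(φh_t)′(u)` have explicit antiderivatives in `t`: `h_t′(u)` is the `t`-derivative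
of `erf (u / (2√t)) / 2`, and `h_t(u)` that of `2t h_t(u) + u erf (u / (2√t)) / 2`. As `t → 0⁺`
these tend to `sign u / 2` and `u sign u / 2`, so the integral over `(0, Λ)` converges for every
`u`, and its value depends on `u` smoothly apart from the factor `sign u`. On each open sector the
signs of `x - y` and `x + y` are constant, and replacing them by these constants gives a function
smooth on the whole plane.
-/

/-- The error function `2/√π ∫₀ˢ exp(-v²) dv`. -/
noncomputable def erf (s : ℝ) : ℝ := 2 / √Real.pi * ∫ v in (0 : ℝ)..s, Real.exp (-v ^ 2)

lemma hasDerivAt_erf (s : ℝ) : HasDerivAt erf (2 / √Real.pi * Real.exp (-s ^ 2)) s := by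
  have gaussian_continuous : Continuous fun v : ℝ ↦ Real.exp (-v ^ 2) := by fun_prop
  exact (gaussian_continuous.integral_hasStrictDerivAt 0 s).hasDerivAt.const_mul _

lemma contDiff_erf : ContDiff ℝ (⊤ : ℕ∞) erf := by
  have deriv_erf : deriv erf = fun s ↦ 2 / √Real.pi * Real.exp (-s ^ 2) :=
    funext fun s ↦ (hasDerivAt_erf s).deriv
  refine contDiff_infty_iff_deriv.2 ⟨fun s ↦ (hasDerivAt_erf s).differentiableAt, ?_⟩
  rw [deriv_erf]
  fun_prop

lemma erf_zero : erf 0 = 0 := by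
  simp [erf]

lemma erf_neg (s : ℝ) : erf (-s) = -erf s := by
  have reflection := intervalIntegral.integral_comp_neg (a := 0) (b := s)
    fun v ↦ Real.exp (-v ^ 2)
  simp only [neg_sq, neg_zero] at reflection
  rw [erf, erf, reflection, intervalIntegral.integral_symm, mul_neg]

lemma tendsto_erf_atTop : Tendsto erf atTop (𝓝 1) := by
  have gaussian_integrable : IntegrableOn (fun v : ℝ ↦ Real.exp (-v ^ 2)) (Set.Ioi 0) := by
    simpa using (integrable_exp_neg_mul_sq one_pos).integrableOn (s := Set.Ioi (0 : ℝ))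
  have gaussian_integral : ∫ v in Set.Ioi (0 : ℝ), Real.exp (-v ^ 2) = √Real.pi / 2 := by
    simpa using integral_gaussian_Ioi 1
  have normalization : 2 / √Real.pi * (√Real.pi / 2) = 1 := by field_simp
  have limit := intervalIntegral_tendsto_integral_Ioi 0 gaussian_integrable tendsto_id
  rw [gaussian_integral] at limit
  rw [← normalization]
  exact limit.const_mul _

lemma tendsto_inv_two_mul_sqrt : Tendsto (fun t : ℝ ↦ (2 * √t)⁻¹) (𝓝[>] 0) atTop := by
  refine tendsto_inv_nhdsGT_zero.comp (tendsto_nhdsWithin_iff.2 ⟨?_, ?_⟩)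
  · exact (Continuous.tendsto' (by fun_prop) 0 0 (by simp)).mono_left nhdsWithin_le_nhds
  · filter_upwards [self_mem_nhdsWithin] with t ht
    exact mul_pos two_pos (Real.sqrt_pos.2 ht)

lemma tendsto_erf_div_two_mul_sqrt_of_pos {u : ℝ} (hu : 0 < u) :
    Tendsto (fun t ↦ erf (u / (2 * √t))) (𝓝[>] 0) (𝓝 1) :=
  tendsto_erf_atTop.comp (tendsto_inv_two_mul_sqrt.const_mul_atTop hu)

lemma tendsto_erf_div_two_mul_sqrt (u : ℝ) :
    Tendsto (fun t ↦ erf (u / (2 * √t))) (𝓝[>] 0) (𝓝 (Real.sign u)) := by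
  rcases lt_trichotomy u 0 with hu | rfl | hu
  · rw [Real.sign_of_neg hu]
    refine (tendsto_erf_div_two_mul_sqrt_of_pos (neg_pos.2 hu)).neg.congr fun t ↦ ?_
    rw [neg_div, erf_neg, neg_neg]
  · simp only [zero_div, erf_zero, Real.sign_zero, tendsto_const_nhds]
  · rw [Real.sign_of_pos hu]
    exact tendsto_erf_div_two_mul_sqrt_of_pos hu

lemma heat_eq (t u : ℝ) :
    heat t u = (2 * √Real.pi)⁻¹ * ((√t)⁻¹ * Real.exp (-u ^ 2 / (4 * t))) := by
  have sqrt_four : √(4 : ℝ) = 2 := by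
    rw [show (4 : ℝ) = 2 ^ 2 by norm_num, Real.sqrt_sq zero_le_two]
  rw [heat, Real.sqrt_mul (by positivity), Real.sqrt_mul (by norm_num), sqrt_four,
    mul_inv, mul_assoc]

lemma hasDerivAt_heat_time {t : ℝ} (ht : 0 < t) (u : ℝ) :
    HasDerivAt (fun t ↦ heat t u) ((u ^ 2 / (4 * t ^ 2) - 1 / (2 * t)) * heat t u) t := by
  have sqrt_pos : 0 < √t := Real.sqrt_pos.2 ht
  have exponent : HasDerivAt (fun t ↦ -u ^ 2 / (4 * t)) (u ^ 2 / (4 * t ^ 2)) t := by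
    refine ((hasDerivAt_const t (-u ^ 2)).fun_div ((hasDerivAt_id' t).const_mul 4)
      (by positivity)).congr_deriv ?_
    field_simp
    ring
  simp only [heat_eq]
  refine ((((Real.hasDerivAt_sqrt ht.ne').fun_inv sqrt_pos.ne').fun_mul exponent.exp).const_mul
    (2 * √Real.pi)⁻¹).congr_deriv ?_
  rw [Real.sq_sqrt ht.le]
  field_simp
  ring

lemma hasDerivAt_erf_div_two_mul_sqrt_time {t : ℝ} (ht : 0 < t) (u : ℝ) :
    HasDerivAt (fun t ↦ erf (u / (2 * √t)) / 2) (heat' t u) t := by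
  have argument : HasDerivAt (fun t ↦ u / (2 * √t)) (-u / (4 * t * √t)) t := by
    refine ((hasDerivAt_const t u).fun_div ((Real.hasDerivAt_sqrt ht.ne').const_mul 2)
      (by positivity)).congr_deriv ?_
    rw [mul_pow, Real.sq_sqrt ht.le]
    field_simp
    ring
  have argument_sq : -(u / (2 * √t)) ^ 2 = -u ^ 2 / (4 * t) := by
    rw [div_pow, mul_pow, Real.sq_sqrt ht.le]
    ring
  refine (((hasDerivAt_erf _).comp t argument).div_const 2).congr_deriv ?_
  rw [argument_sq, heat', heat_eq]
  field_simp
  ring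

/-- The antiderivative `2t h_t(u) + u erf (u / (2√t)) / 2` of `t ↦ h_t(u)`. -/
noncomputable def heatPrimitive (t u : ℝ) : ℝ :=
  2 * t * heat t u + u * (erf (u / (2 * √t)) / 2)

lemma hasDerivAt_heatPrimitive {t : ℝ} (ht : 0 < t) (u : ℝ) :
    HasDerivAt (fun t ↦ heatPrimitive t u) (heat t u) t := by
  refine ((((hasDerivAt_id' t).const_mul 2).fun_mul (hasDerivAt_heat_time ht u)).fun_add
    ((hasDerivAt_erf_div_two_mul_sqrt_time ht u).const_mul u)).congr_deriv ?_
  rw [heat']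
  field_simp
  ring

lemma two_mul_mul_heat {t : ℝ} (ht : 0 < t) (u : ℝ) :
    2 * t * heat t u = √t / √Real.pi * Real.exp (-u ^ 2 / (4 * t)) := by
  rw [heat_eq]
  field_simp
  rw [Real.sq_sqrt ht.le]

lemma tendsto_two_mul_mul_heat (u : ℝ) :
    Tendsto (fun t ↦ 2 * t * heat t u) (𝓝[>] 0) (𝓝 0) := by
  have sqrt_tendsto : Tendsto (fun t ↦ √t / √Real.pi) (𝓝[>] 0) (𝓝 0) :=
    (Continuous.tendsto' (by fun_prop) 0 0 (by simp)).mono_left nhdsWithin_le_nhds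
  refine squeeze_zero' ?_ ?_ sqrt_tendsto
  all_goals filter_upwards [self_mem_nhdsWithin] with t (ht : 0 < t)
  all_goals rw [two_mul_mul_heat ht]
  · positivity
  · refine mul_le_of_le_one_right (by positivity) (Real.exp_le_one_iff.2 ?_)
    exact div_nonpos_of_nonpos_of_nonneg (neg_nonpos.2 (sq_nonneg u)) (by positivity)

lemma tendsto_heatPrimitive (u : ℝ) :
    Tendsto (fun t ↦ heatPrimitive t u) (𝓝[>] 0) (𝓝 (u * (Real.sign u / 2))) := by
  rw [← zero_add (u * _)]
  exact (tendsto_two_mul_mul_heat u).add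
    (((tendsto_erf_div_two_mul_sqrt u).div_const 2).const_mul u)

/-- An antiderivative in `t` of `(φh_t)′(u)`. -/
noncomputable def phiHeatPrimitive (φ : ℝ → ℝ) (t u : ℝ) : ℝ :=
  deriv φ u * heatPrimitive t u + φ u * (erf (u / (2 * √t)) / 2)

/-- The integral `∫₀^Λ (φh_t)′(u) dt`, with the sign of `u` replaced by the parameter `σ`. This
makes it smooth in `u` on all of `ℝ`. -/
noncomputable def phiHeatIntegral (φ : ℝ → ℝ) (σ Λ u : ℝ) : ℝ :=
  phiHeatPrimitive φ Λ u - (deriv φ u * (u * (σ / 2)) + φ u * (σ / 2))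

section

variable (φ : ℝ → ℝ)

lemma hasDerivAt_phiHeatPrimitive {t : ℝ} (ht : 0 < t) (u : ℝ) :
    HasDerivAt (fun t ↦ phiHeatPrimitive φ t u) (phiHeat' φ t u) t :=
  ((hasDerivAt_heatPrimitive ht u).const_mul _).add
    ((hasDerivAt_erf_div_two_mul_sqrt_time ht u).const_mul _)

lemma continuousAt_phiHeat'_time {t : ℝ} (ht : 0 < t) (u : ℝ) :
    ContinuousAt (fun t ↦ phiHeat' φ t u) t := by
  have heat_continuousAt : ContinuousAt (fun t ↦ heat t u) t :=
    (hasDerivAt_heat_time ht u).continuousAt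
  have two_mul_ne_zero : 2 * t ≠ 0 := by positivity
  unfold phiHeat' heat'
  fun_prop (disch := assumption)

lemma intervalIntegrable_phiHeat' {a b : ℝ} (ha : 0 < a) (hb : 0 < b) (u : ℝ) :
    IntervalIntegrable (fun t ↦ phiHeat' φ t u) volume a b :=
  ContinuousOn.intervalIntegrable fun _t ht ↦
    (continuousAt_phiHeat'_time φ ((lt_min ha hb).trans_le ht.1) u).continuousWithinAt

lemma integral_phiHeat' {a b : ℝ} (ha : 0 < a) (hb : 0 < b) (u : ℝ) :
    ∫ t in a..b, phiHeat' φ t u = phiHeatPrimitive φ b u - phiHeatPrimitive φ a u :=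
  intervalIntegral.integral_eq_sub_of_hasDerivAt
    (fun _t ht ↦ hasDerivAt_phiHeatPrimitive φ ((lt_min ha hb).trans_le ht.1) u)
    (intervalIntegrable_phiHeat' φ ha hb u)

lemma tendsto_phiHeatPrimitive (u : ℝ) :
    Tendsto (fun t ↦ phiHeatPrimitive φ t u) (𝓝[>] 0)
      (𝓝 (deriv φ u * (u * (Real.sign u / 2)) + φ u * (Real.sign u / 2))) :=
  ((tendsto_heatPrimitive u).const_mul _).add
    (((tendsto_erf_div_two_mul_sqrt u).div_const 2).const_mul _)

lemma tendsto_integral_phiHeat' {Λ : ℝ} (hΛ : 0 < Λ) (u : ℝ) :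
    Tendsto (fun ε ↦ ∫ t in ε..Λ, phiHeat' φ t u) (𝓝[>] 0)
      (𝓝 (phiHeatIntegral φ (Real.sign u) Λ u)) := by
  refine ((tendsto_phiHeatPrimitive φ u).const_sub (phiHeatPrimitive φ Λ u)).congr' ?_
  filter_upwards [self_mem_nhdsWithin] with ε hε
  exact (integral_phiHeat' φ hε hΛ u).symm

lemma tendsto_rho {Λ : ℝ} (hΛ : 0 < Λ) (x y : ℝ) :
    Tendsto (fun ε ↦ rho φ ε Λ x y) (𝓝[>] 0)
      (𝓝 (-(1 / 2) * (phiHeatIntegral φ (Real.sign (x - y)) Λ (x - y) +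
        phiHeatIntegral φ (Real.sign (x + y)) Λ (x + y)))) := by
  refine (((tendsto_integral_phiHeat' φ hΛ (x - y)).add
    (tendsto_integral_phiHeat' φ hΛ (x + y))).const_mul (-(1 / 2))).congr' ?_
  filter_upwards [self_mem_nhdsWithin] with ε hε
  rw [rho, intervalIntegral.integral_add (intervalIntegrable_phiHeat' φ hε hΛ _)
    (intervalIntegrable_phiHeat' φ hε hΛ _)]

end

section

variable {φ : ℝ → ℝ} {n : ℕ∞}

lemma contDiff_phiHeatIntegral (hφ : ContDiff ℝ (n + 1) φ) (σ Λ : ℝ) :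
    ContDiff ℝ n (phiHeatIntegral φ σ Λ) := by
  have contDiff_φ : ContDiff ℝ n φ := hφ.of_le le_self_add
  have contDiff_erf_n : ContDiff ℝ n erf := contDiff_erf.of_le (mod_cast le_top)
  unfold phiHeatIntegral phiHeatPrimitive heatPrimitive heat
  fun_prop

lemma exists_contDiff_eq_rhoBar_of_sign (hφ : ContDiff ℝ (n + 1) φ) {Λ : ℝ} (hΛ : 0 < Λ)
    (σ τ : ℝ) :
    ∃ r : ℝ × ℝ → ℝ, ContDiff ℝ n r ∧ ∀ x y : ℝ, Real.sign (x - y) = σ → Real.sign (x + y) = τ →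
      r (x, y) = rhoBar φ Λ x y := by
  have smooth_difference := contDiff_phiHeatIntegral hφ σ Λ
  have smooth_sum := contDiff_phiHeatIntegral hφ τ Λ
  refine ⟨fun p ↦ -(1 / 2) * (phiHeatIntegral φ σ Λ (p.1 - p.2) +
    phiHeatIntegral φ τ Λ (p.1 + p.2)), by fun_prop, ?_⟩
  rintro x y rfl rfl
  exact (tendsto_rho φ hΛ x y).limUnder_eq.symm

theorem stmt7_general (hφ : ContDiff ℝ (n + 1) φ) {Λ : ℝ} (hΛ : 0 < Λ) :
    (∃ r : ℝ × ℝ → ℝ, ContDiff ℝ n r ∧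
      ∀ x y : ℝ, 0 ≤ x → x < y → r (x, y) = rhoBar φ Λ x y) ∧
    (∃ rt : ℝ × ℝ → ℝ, ContDiff ℝ n rt ∧
      ∀ x y : ℝ, 0 ≤ y → y < x → rt (x, y) = rhoBar φ Λ x y) := by
  obtain ⟨r, r_contDiff, r_eq⟩ := exists_contDiff_eq_rhoBar_of_sign hφ hΛ (-1) 1
  obtain ⟨rt, rt_contDiff, rt_eq⟩ := exists_contDiff_eq_rhoBar_of_sign hφ hΛ 1 1
  exact ⟨⟨r, r_contDiff, fun x y hx hxy ↦
      r_eq x y (Real.sign_of_neg (by linarith)) (Real.sign_of_pos (by linarith))⟩,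
    ⟨rt, rt_contDiff, fun x y hy hyx ↦
      rt_eq x y (Real.sign_of_pos (by linarith)) (Real.sign_of_pos (by linarith))⟩⟩

end

/-- The `ε → 0` limit `ρ̄_Λ` of the propagator kernel extends smoothly to each of the
two closed sectors `{0 ≤ x ≤ y}` and `{0 ≤ y ≤ x}`: there are `C^∞` functions
`r, r̃ : ℝ² → ℝ` agreeing with `ρ̄_Λ` on `{0 ≤ x < y}` and `{0 ≤ y < x}` respectively. -/
theorem stmt7 (φ : ℝ → ℝ) (hφ : ContDiff ℝ (⊤ : ℕ∞) φ) (hsupp : HasCompactSupport φ)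
    (heven : ∀ x, φ (-x) = φ x) (δ : ℝ) (hδ : 0 < δ) (hone : ∀ x, |x| < δ → φ x = 1)
    (Λ : ℝ) (hΛ : 0 < Λ) :
    (∃ r : ℝ × ℝ → ℝ, ContDiff ℝ (⊤ : ℕ∞) r ∧
      ∀ x y : ℝ, 0 ≤ x → x < y → r (x, y) = rhoBar φ Λ x y) ∧
    (∃ rt : ℝ × ℝ → ℝ, ContDiff ℝ (⊤ : ℕ∞) rt ∧
      ∀ x y : ℝ, 0 ≤ y → y < x → rt (x, y) = rhoBar φ Λ x y) :=
  stmt7_general (n := ⊤) hφ hΛ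
end
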